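/- Let V be a module over ℂ, let g : Fin r → Module.End ℂ V be pairwise commuting endomorphisms with (g i)² = 1 for every i, and for s : Fin r → Bool let Π_s be the product over i of (1/2)·(1 + (−1)^{s i}·g i). Let P = Π_{s₀} where s₀ is the constant-false string (the projector onto the joint +1 eigenspace of all g i). Let E : Module.End ℂ V and r_E : Fin r → Bool satisfy the commutation relations g i ∘ E = (−1)^{r_E i} · (E ∘ g i) for every i. Then for every s : Fin r → Bool, Π_s ∘ E ∘ P = (if s = r_E then (1:ℂ) else 0) • (E ∘ P). -/

import Mathlib

/-- The syndrome projector `Π_s = ∏_i (1 + (−1)^{s i} g i)/2`, as an ordered product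
(well defined in any order when the `g i` pairwise commute). -/
noncomputable def synProj {V : Type*} [AddCommGroup V] [Module ℂ V] {r : ℕ}
    (g : Fin r → Module.End ℂ V) (s : Fin r → Bool) : Module.End ℂ V :=
  (List.ofFn (fun i : Fin r => (1 / 2 : ℂ) • (1 + (if s i then (-1 : ℂ) else 1) • g i))).prod

/-! The projector `Π_t` is a simultaneous eigenvector, with eigenvalues `(-1)^{t i}`, for left
multiplication by the `g i`, because `g i` commutes with all factors of `Π_t` and multiplies the
`i`-th one by `(-1)^{t i}`. Moving `g i` past `E` makes `E * Π_t` an eigenvector with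
eigenvalues `(-1)^{r_E i + t i}`. Each factor of `Π_s` then acts on it as `1` or `0`, according to
whether the two signs agree, so that `Π_s * E * Π_t = δ_{s, r_E + t} E * Π_t` with the sum taken
modulo `2`; the theorem is the case `t = 0`. -/

section ListProd

variable {S M X : Type*} [Monoid M]

lemma mul_list_prod_eq_smul_of_mem [SMul S M] [IsScalarTower S M M] [SMulCommClass S M M]
    {a f : M} {c : S} {l : List M} (hf : a * f = c • f) (hl : ∀ x ∈ l, Commute a x)
    (hmem : f ∈ l) : a * l.prod = c • l.prod := by
  obtain ⟨l₁, l₂, rfl⟩ := List.append_of_mem hmem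
  have hl₁ : Commute a l₁.prod :=
    Commute.list_prod_right l₁ a fun x hx => hl x (List.mem_append_left _ hx)
  calc a * (l₁ ++ f :: l₂).prod = l₁.prod * ((a * f) * l₂.prod) := by
        rw [List.prod_append, List.prod_cons, hl₁.left_comm, mul_assoc a]
    _ = c • (l₁ ++ f :: l₂).prod := by
        rw [hf, smul_mul_assoc, mul_smul_comm, List.prod_append, List.prod_cons]

lemma prod_ofFn_smul_eq_prod_smul [CommMonoid S] [MulAction M X] [MulAction S X]
    [SMulCommClass M S X] {n : ℕ} {f : Fin n → M} {c : Fin n → S} {x : X}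
    (h : ∀ i, f i • x = c i • x) : (List.ofFn f).prod • x = (∏ i, c i) • x := by
  induction n with
  | zero => simp
  | succ n ih =>
    rw [List.ofFn_succ, List.prod_cons, mul_smul, ih fun i => h i.succ, smul_comm, h 0, smul_smul,
      Fin.prod_univ_succ, mul_comm]

end ListProd

section BoolSign

variable (R : Type*) [MulOneClass R] [HasDistribNeg R]

/-- The sign `(-1)^b` of a bit `b`, as an element of `R`. -/
def boolSign (b : Bool) : R := if b then -1 else 1

lemma boolSign_mul_boolSign (a b : Bool) :
    boolSign R a * boolSign R b = boolSign R (xor a b) := by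
  cases a <;> cases b <;> simp [boolSign]

end BoolSign

section SyndromeProj

variable (R : Type*) {A : Type*} [CommRing R] [Invertible (2 : R)] [Ring A] [Algebra R A]

/-- The projector `(1 + (-1)^b g) / 2` onto the `(-1)^b`-eigenspace of an involution `g`. -/
def involutionProj (g : A) (b : Bool) : A := (⅟2 : R) • (1 + boolSign R b • g)

lemma commute_involutionProj {a g : A} (h : Commute a g) (b : Bool) :
    Commute a (involutionProj R g b) :=
  ((Commute.one_right a).add_right (h.smul_right _)).smul_right _

lemma mul_involutionProj {g : A} (hg : g ^ 2 = 1) (b : Bool) :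
    g * involutionProj R g b = boolSign R b • involutionProj R g b := by
  have hsign : boolSign R b * boolSign R b = 1 := by
    cases b <;> simp [boolSign]
  calc g * involutionProj R g b = (⅟2 : R) • (g + boolSign R b • (1 : A)) := by
        rw [involutionProj, mul_smul_comm, mul_add, mul_one, mul_smul_comm, ← pow_two, hg]
    _ = (⅟2 : R) • boolSign R b • (1 + boolSign R b • g) := by
        rw [smul_add (boolSign R b), smul_smul (boolSign R b), hsign, one_smul, add_comm]
    _ = boolSign R b • involutionProj R g b := smul_comm _ _ _

lemma involutionProj_mul_of_mul_eq_smul {g x : A} {b : Bool} (hx : g * x = boolSign R b • x)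
    (a : Bool) : involutionProj R g a * x = (if a = b then (1 : R) else 0) • x := by
  have hcoeff : (⅟2 : R) * (1 + boolSign R (xor a b)) = if a = b then 1 else 0 := by
    cases a <;> cases b <;> simp [boolSign, one_add_one_eq_two]
  calc involutionProj R g a * x = (⅟2 : R) • (x + boolSign R a • boolSign R b • x) := by
        rw [involutionProj, smul_mul_assoc, add_mul, one_mul, smul_mul_assoc, hx]
    _ = ((⅟2 : R) * (1 + boolSign R (xor a b))) • x := by
        rw [smul_smul (boolSign R a), boolSign_mul_boolSign, mul_smul, add_smul, one_smul]
    _ = (if a = b then (1 : R) else 0) • x := by rw [hcoeff]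

variable {r : ℕ}

/-- The syndrome projector `Π_s` of a family `g` of commuting involutions in an algebra over a
ring in which `2` is invertible; as in `synProj`, the product is taken in the order of `Fin r`. -/
def syndromeProj (g : Fin r → A) (s : Fin r → Bool) : A :=
  (List.ofFn fun i => involutionProj R (g i) (s i)).prod

lemma mul_syndromeProj {g : Fin r → A} {j : Fin r} (hcomm : ∀ i, Commute (g j) (g i))
    (hsq : g j ^ 2 = 1) (t : Fin r → Bool) :
    g j * syndromeProj R g t = boolSign R (t j) • syndromeProj R g t :=
  mul_list_prod_eq_smul_of_mem (mul_involutionProj R hsq (t j))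
    (List.forall_mem_ofFn_iff.2 fun i => commute_involutionProj R (hcomm i) (t i))
    (List.mem_ofFn.2 ⟨j, rfl⟩)

lemma syndromeProj_mul_of_mul_eq_smul {g : Fin r → A} {x : A} {t : Fin r → Bool}
    (hx : ∀ i, g i * x = boolSign R (t i) • x) (s : Fin r → Bool) :
    syndromeProj R g s * x = (if s = t then (1 : R) else 0) • x := by
  have hdelta : ∏ i, (if s i = t i then (1 : R) else 0) = if s = t then 1 else 0 := by
    simp [Fintype.prod_boole, funext_iff]
  rw [← smul_eq_mul, syndromeProj, prod_ofFn_smul_eq_prod_smul fun i =>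
    involutionProj_mul_of_mul_eq_smul R (hx i) (s i), hdelta]

theorem stmt_14_general {g : Fin r → A} (hcomm : ∀ i j, Commute (g i) (g j))
    (hsq : ∀ i, g i ^ 2 = 1) {E : A} {rE : Fin r → Bool}
    (hsyn : ∀ i, g i * E = boolSign R (rE i) • (E * g i)) (s t : Fin r → Bool) :
    syndromeProj R g s * E * syndromeProj R g t
      = (if s = fun i => xor (rE i) (t i) then (1 : R) else 0) • (E * syndromeProj R g t) := by
  rw [mul_assoc]
  refine syndromeProj_mul_of_mul_eq_smul R (fun i => ?_) s
  calc g i * (E * syndromeProj R g t)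
      = boolSign R (rE i) • (E * (g i * syndromeProj R g t)) := by
        rw [← mul_assoc, hsyn, smul_mul_assoc, mul_assoc]
    _ = boolSign R (xor (rE i) (t i)) • (E * syndromeProj R g t) := by
        rw [mul_syndromeProj R (hcomm i) (hsq i), mul_smul_comm, smul_smul, boolSign_mul_boolSign]

end SyndromeProj

lemma synProj_eq_syndromeProj {V : Type*} [AddCommGroup V] [Module ℂ V] {r : ℕ}
    (g : Fin r → Module.End ℂ V) (s : Fin r → Bool) : synProj g s = syndromeProj ℂ g s := by
  simp only [synProj, syndromeProj, involutionProj, boolSign, invOf_eq_inv, one_div]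

theorem stmt_14 {V : Type*} [AddCommGroup V] [Module ℂ V] {r : ℕ}
    (g : Fin r → Module.End ℂ V)
    (hcomm : ∀ i j, Commute (g i) (g j))
    (hsq : ∀ i, (g i) ^ 2 = 1)
    (E : Module.End ℂ V) (rE : Fin r → Bool)
    (hsyn : ∀ i, g i * E = (if rE i then (-1 : ℂ) else 1) • (E * g i)) :
    ∀ s : Fin r → Bool,
      synProj g s * E * synProj g (fun _ => false)
        = (if s = rE then (1 : ℂ) else 0) • (E * synProj g (fun _ => false)) := by
  intro s
  simpa only [synProj_eq_syndromeProj, Bool.xor_false] using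
    stmt_14_general ℂ hcomm hsq hsyn s fun _ => false
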